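/- arXiv:2207.03381 — 3 statements merged into one kernel-verified Lean document; each statement's English description precedes it below -/
import Mathlib

section
/- Let G be a disconnected graph whose connected components H_1, …, H_m (m ≥ 2) are connected bipartite graphs, where H_i has q_i ≥ 1 edges and bipartition (X_i, Y_i), and admits a set-ordered graceful labeling f_i with max f_i(X_i) < min f_i(Y_i). Set q = q_1 + ⋯ + q_m. Then G admits a flawed set-ordered graceful labeling: there exists an injective map g : V(G) → {0, 1, …, q + m − 1} such that max g(X) < min g(Y), where X = X_1 ∪ … ∪ X_m and Y = Y_1 ∪ … ∪ Y_m, and the q induced edge labels g(uv) = |g(u) − g(v)|, over all edges uv of G, are pairwise distinct (hence form a q-element subset of {1, …, q + m − 1}). -/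
/-- `(X, Y)` is a bipartition of the graph `G`: every vertex lies in exactly one of `X, Y`,
and every edge joins a vertex of `X` to a vertex of `Y`. -/
def IsBipartitionOf {V : Type} (G : SimpleGraph V) (X Y : Set V) : Prop :=
  (∀ v : V, v ∈ X ∨ v ∈ Y) ∧ Disjoint X Y ∧
    ∀ ⦃u v : V⦄, G.Adj u v → (u ∈ X ∧ v ∈ Y) ∨ (u ∈ Y ∧ v ∈ X)

/-- The vertex/edge color membership constraints common to all `(k,d)`-total colorings:
colors of `X`-vertices are multiples of `d`, colors of `Y`-vertices and of edges lie in
`{k + jd : j ≥ 0}`. -/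
def KDTotalVertexCond {V : Type} (G : SimpleGraph V) (X Y : Set V) (k d : ℕ)
    (fV : V → ℕ) (fE : Sym2 V → ℕ) : Prop :=
  (∀ x ∈ X, d ∣ fV x) ∧
  (∀ y ∈ Y, ∃ j : ℕ, fV y = k + j * d) ∧
  (∀ ⦃u v : V⦄, G.Adj u v → ∃ j : ℕ, fE s(u, v) = k + j * d)

/-- The set of colors used on the edges of `G`. -/
def EdgeColorSet {V : Type} (G : SimpleGraph V) (fE : Sym2 V → ℕ) : Set ℕ :=
  {c : ℕ | ∃ u v : V, G.Adj u v ∧ fE s(u, v) = c}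

/-- The set `{k + jd : 0 ≤ j ≤ q - 1}`. -/
def ArithProgSet (k d q : ℕ) : Set ℕ := {c : ℕ | ∃ j : ℕ, j < q ∧ c = k + j * d}

/-- The odd set `{k + (2j - 1)d : 1 ≤ j ≤ q}`. -/
def OddArithProgSet (k d q : ℕ) : Set ℕ :=
  {c : ℕ | ∃ j : ℕ, 1 ≤ j ∧ j ≤ q ∧ c = k + (2 * j - 1) * d}

/-- A graceful `(k,d)`-total coloring of `G` (with bipartition `(X,Y)` and `q` edges). -/
def GracefulKDTotalColoring {V : Type} (G : SimpleGraph V) (X Y : Set V) (k d q : ℕ)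
    (fV : V → ℕ) (fE : Sym2 V → ℕ) : Prop :=
  KDTotalVertexCond G X Y k d fV fE ∧
  (∀ ⦃u v : V⦄, G.Adj u v → fE s(u, v) = Nat.dist (fV u) (fV v)) ∧
  EdgeColorSet G fE = ArithProgSet k d q

/-- A harmonious `(k,d)`-total coloring of `G`:
`f(uv) - k ≡ f(u) + f(v) - k (mod qd)` for every edge `uv`. -/
def HarmoniousKDTotalColoring {V : Type} (G : SimpleGraph V) (X Y : Set V) (k d q : ℕ)
    (fV : V → ℕ) (fE : Sym2 V → ℕ) : Prop :=
  KDTotalVertexCond G X Y k d fV fE ∧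
  (∀ ⦃u v : V⦄, G.Adj u v →
    Int.ModEq ((q * d : ℕ) : ℤ) ((fE s(u, v) : ℤ) - (k : ℤ))
      (((fV u : ℤ) + (fV v : ℤ)) - (k : ℤ))) ∧
  EdgeColorSet G fE = ArithProgSet k d q

/-- An edge-magic `(k,d)`-total coloring: `f(u) + f(uv) + f(v)` is constant. -/
def EdgeMagicKDTotalColoring {V : Type} (G : SimpleGraph V) (X Y : Set V) (k d q : ℕ)
    (fV : V → ℕ) (fE : Sym2 V → ℕ) : Prop :=
  KDTotalVertexCond G X Y k d fV fE ∧
  (∃ c : ℕ, ∀ ⦃u v : V⦄, G.Adj u v → fV u + fE s(u, v) + fV v = c) ∧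
  EdgeColorSet G fE = ArithProgSet k d q

/-- An edge-difference `(k,d)`-total coloring: `f(uv) + |f(u) - f(v)|` is constant. -/
def EdgeDifferenceKDTotalColoring {V : Type} (G : SimpleGraph V) (X Y : Set V) (k d q : ℕ)
    (fV : V → ℕ) (fE : Sym2 V → ℕ) : Prop :=
  KDTotalVertexCond G X Y k d fV fE ∧
  (∃ c : ℕ, ∀ ⦃u v : V⦄, G.Adj u v → fE s(u, v) + Nat.dist (fV u) (fV v) = c) ∧
  EdgeColorSet G fE = ArithProgSet k d q

/-- A graceful-difference `(k,d)`-total coloring: `||f(u) - f(v)| - f(uv)|` is constant. -/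
def GracefulDifferenceKDTotalColoring {V : Type} (G : SimpleGraph V) (X Y : Set V) (k d q : ℕ)
    (fV : V → ℕ) (fE : Sym2 V → ℕ) : Prop :=
  KDTotalVertexCond G X Y k d fV fE ∧
  (∃ c : ℕ, ∀ ⦃u v : V⦄, G.Adj u v →
    ((Nat.dist (fV u) (fV v) : ℤ) - (fE s(u, v) : ℤ)).natAbs = c) ∧
  EdgeColorSet G fE = ArithProgSet k d q

/-- A felicitous-difference `(k,d)`-total coloring: `|f(u) + f(v) - f(uv)|` is constant. -/
def FelicitousDifferenceKDTotalColoring {V : Type} (G : SimpleGraph V) (X Y : Set V) (k d q : ℕ)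
    (fV : V → ℕ) (fE : Sym2 V → ℕ) : Prop :=
  KDTotalVertexCond G X Y k d fV fE ∧
  (∃ c : ℕ, ∀ ⦃u v : V⦄, G.Adj u v →
    (((fV u : ℤ) + (fV v : ℤ)) - (fE s(u, v) : ℤ)).natAbs = c) ∧
  EdgeColorSet G fE = ArithProgSet k d q

/-- An edge-antimagic `(k,d)`-total coloring: the sums `f(u) + f(uv) + f(v)` over the edges
form the set `{2k + 2(a+j)d : 0 ≤ j ≤ q - 1}` for some `a ≥ 0`. -/
def EdgeAntimagicKDTotalColoring {V : Type} (G : SimpleGraph V) (X Y : Set V) (k d q : ℕ)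
    (fV : V → ℕ) (fE : Sym2 V → ℕ) : Prop :=
  KDTotalVertexCond G X Y k d fV fE ∧
  ∃ a : ℕ, {c : ℕ | ∃ u v : V, G.Adj u v ∧ fV u + fE s(u, v) + fV v = c}
      = {c : ℕ | ∃ j : ℕ, j < q ∧ c = 2 * k + 2 * (a + j) * d}

/-- An odd-edge graceful-difference `(k,d)`-total coloring. -/
def OddEdgeGracefulDifferenceKDTotalColoring {V : Type} (G : SimpleGraph V) (X Y : Set V)
    (k d q : ℕ) (fV : V → ℕ) (fE : Sym2 V → ℕ) : Prop :=
  KDTotalVertexCond G X Y k d fV fE ∧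
  (∃ c : ℕ, ∀ ⦃u v : V⦄, G.Adj u v →
    ((Nat.dist (fV u) (fV v) : ℤ) - (fE s(u, v) : ℤ)).natAbs = c) ∧
  EdgeColorSet G fE = OddArithProgSet k d q

/-- An odd-edge edge-difference `(k,d)`-total coloring. -/
def OddEdgeEdgeDifferenceKDTotalColoring {V : Type} (G : SimpleGraph V) (X Y : Set V)
    (k d q : ℕ) (fV : V → ℕ) (fE : Sym2 V → ℕ) : Prop :=
  KDTotalVertexCond G X Y k d fV fE ∧
  (∃ c : ℕ, ∀ ⦃u v : V⦄, G.Adj u v → fE s(u, v) + Nat.dist (fV u) (fV v) = c) ∧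
  EdgeColorSet G fE = OddArithProgSet k d q

/-- An odd-edge edge-magic `(k,d)`-total coloring. -/
def OddEdgeEdgeMagicKDTotalColoring {V : Type} (G : SimpleGraph V) (X Y : Set V)
    (k d q : ℕ) (fV : V → ℕ) (fE : Sym2 V → ℕ) : Prop :=
  KDTotalVertexCond G X Y k d fV fE ∧
  (∃ c : ℕ, ∀ ⦃u v : V⦄, G.Adj u v → fV u + fE s(u, v) + fV v = c) ∧
  EdgeColorSet G fE = OddArithProgSet k d q

/-- An odd-edge felicitous-difference `(k,d)`-total coloring. -/
def OddEdgeFelicitousDifferenceKDTotalColoring {V : Type} (G : SimpleGraph V) (X Y : Set V)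
    (k d q : ℕ) (fV : V → ℕ) (fE : Sym2 V → ℕ) : Prop :=
  KDTotalVertexCond G X Y k d fV fE ∧
  (∃ c : ℕ, ∀ ⦃u v : V⦄, G.Adj u v →
    (((fV u : ℤ) + (fV v : ℤ)) - (fE s(u, v) : ℤ)).natAbs = c) ∧
  EdgeColorSet G fE = OddArithProgSet k d q

/-- A set-ordered graceful labeling of `G` (with bipartition `(X,Y)` and `q` edges):
an injective map into `{0, …, q}` whose induced edge labels `|f(u) - f(v)|` are exactly
`{1, …, q}`, with `max f(X) < min f(Y)`. -/
def SetOrderedGracefulLabeling {V : Type} (G : SimpleGraph V) (X Y : Set V)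
    (f : V → ℕ) (q : ℕ) : Prop :=
  Function.Injective f ∧ (∀ v : V, f v ≤ q) ∧
  (∀ x ∈ X, ∀ y ∈ Y, f x < f y) ∧
  {c : ℕ | ∃ u v : V, G.Adj u v ∧ Nat.dist (f u) (f v) = c} = Set.Icc 1 q

/-!
The components are nested inside one another. If the labels of `X₁ ∪ Y₁` use `[0, n₁)`, with `X₁`
below the threshold `s₁` and `Y₁` above it, then a labeling of a second component with `n₂` labels
fits into a gap of length `n₂` opened at `s₁`, giving the order `X₁ < X₂ < Y₂ < Y₁`. This adds `n₂`
to every edge label of the first component and leaves those of the second, which are below `n₂`,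
unchanged, so distinctness persists. A graceful component with `q` edges uses `q + 1` labels, hence
`∑ (qᵢ + 1) = q + m` labels are used in total.
-/

section EdgeLabel

variable {V : Type*}

/-- The edge labeling `uv ↦ |f u - f v|` induced by a vertex labeling `f`. -/
def edgeLabel (f : V → ℕ) : Sym2 V → ℕ :=
  Sym2.lift ⟨fun u v => Nat.dist (f u) (f v), fun _ _ => Nat.dist_comm _ _⟩

@[simp]
theorem edgeLabel_mk (f : V → ℕ) (u v : V) : edgeLabel f s(u, v) = Nat.dist (f u) (f v) :=
  rfl

theorem injOn_edgeLabel_of_image_eq_Icc {G : SimpleGraph V} [Finite G.edgeSet] {f : V → ℕ}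
    (hf : edgeLabel f '' G.edgeSet = Set.Icc 1 (Nat.card G.edgeSet)) :
    Set.InjOn (edgeLabel f) G.edgeSet := by
  refine Set.injOn_of_ncard_image_eq ?_ (Set.toFinite _)
  rw [hf, ← Nat.card_coe_set_eq G.edgeSet, Set.ncard_eq_toFinset_card', Set.toFinset_Icc,
    Nat.card_Icc, Nat.add_sub_cancel]

theorem edgeLabel_image_edgeSet_induce (G : SimpleGraph V) (P : Set V) (f : V → ℕ) :
    edgeLabel (fun v : P => f v) '' (G.induce P).edgeSet =
      {c | ∃ u ∈ P, ∃ v ∈ P, G.Adj u v ∧ Nat.dist (f u) (f v) = c} := by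
  ext c
  constructor
  · rintro ⟨e, he, rfl⟩
    induction e with
    | h u v => exact ⟨u, u.2, v, v.2, he, rfl⟩
  · rintro ⟨u, hu, v, hv, huv, rfl⟩
    exact ⟨s(⟨u, hu⟩, ⟨v, hv⟩), huv, rfl⟩

end EdgeLabel

theorem exists_threshold_of_forall_lt {α : Type*} [LinearOrder α] [WellFoundedLT α] {A B : Set α}
    {n : α} (hA : ∀ a ∈ A, a < n) (hAB : ∀ a ∈ A, ∀ b ∈ B, a < b) :
    ∃ s ≤ n, (∀ a ∈ A, a < s) ∧ ∀ b ∈ B, s ≤ b := by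
  obtain ⟨s, hs, hmin⟩ := wellFounded_lt.has_min (insert n B) (Set.insert_nonempty n B)
  refine ⟨s, not_lt.1 (hmin n (Set.mem_insert n B)), fun a ha => ?_,
    fun b hb => not_lt.1 (hmin b (Set.mem_insert_of_mem n hb))⟩
  exact hs.elim (fun hsn => (hA a ha).trans_eq hsn.symm) (hAB a ha s)

/-- A flawed set-ordered labeling, with values in `{0, …, n - 1}`, of the bipartite graph formed by
the edges of `G` between `X` and `Y`. The condition `max g(X) < min g(Y)` is witnessed by a
threshold `s`, so that it makes sense for empty sides, and edges are taken as pairs `(x, y)` with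
`x ∈ X` and `y ∈ Y`, so that the label of an edge is `g y - g x`. -/
structure FlawedSetOrderedLabeling {V : Type*} (G : SimpleGraph V) (X Y : Set V) (s n : ℕ)
    (g : V → ℕ) : Prop where
  threshold_le : s ≤ n
  injOn : Set.InjOn g (X ∪ Y)
  left_lt : ∀ x ∈ X, g x < s
  le_right : ∀ y ∈ Y, s ≤ g y
  right_lt : ∀ y ∈ Y, g y < n
  -- the hypothesis is `g y - g x = g y' - g x'` without truncated subtraction
  edge_unique : ∀ x ∈ X, ∀ y ∈ Y, ∀ x' ∈ X, ∀ y' ∈ Y, G.Adj x y → G.Adj x' y' →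
    g y + g x' = g y' + g x → x = x' ∧ y = y'

/-- The labeling that keeps `g₁` on `X₁`, raises it by `n₂` on `Y₁`, and puts `g₂`, raised by `s₁`,
everywhere else: the values of `g₂` fill the gap opened between the labels of `X₁` and `Y₁`. -/
noncomputable def nestedLabeling {V : Type*} (X₁ Y₁ : Set V) (s₁ n₂ : ℕ) (g₁ g₂ : V → ℕ) : V → ℕ :=
  open Classical in
  fun v => if v ∈ X₁ then g₁ v else if v ∈ Y₁ then g₁ v + n₂ else g₂ v + s₁

section NestedLabeling

variable {V : Type*} {X₁ Y₁ : Set V} {s₁ n₂ : ℕ} {g₁ g₂ : V → ℕ} {v : V}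

theorem nestedLabeling_of_mem_left (hv : v ∈ X₁) :
    nestedLabeling X₁ Y₁ s₁ n₂ g₁ g₂ v = g₁ v :=
  if_pos hv

theorem nestedLabeling_of_mem_right (hX : v ∉ X₁) (hY : v ∈ Y₁) :
    nestedLabeling X₁ Y₁ s₁ n₂ g₁ g₂ v = g₁ v + n₂ :=
  (if_neg hX).trans (if_pos hY)

theorem nestedLabeling_of_notMem (hv : v ∉ X₁ ∪ Y₁) :
    nestedLabeling X₁ Y₁ s₁ n₂ g₁ g₂ v = g₂ v + s₁ :=
  (if_neg fun hX => hv (Or.inl hX)).trans (if_neg fun hY => hv (Or.inr hY))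

end NestedLabeling

namespace FlawedSetOrderedLabeling

variable {V : Type*} {G : SimpleGraph V}

section Single

variable {X Y : Set V} {s n : ℕ} {g : V → ℕ}

theorem left_lt_right (h : FlawedSetOrderedLabeling G X Y s n g) {x y : V} (hx : x ∈ X)
    (hy : y ∈ Y) : g x < g y :=
  (h.left_lt x hx).trans_le (h.le_right y hy)

theorem disjoint (h : FlawedSetOrderedLabeling G X Y s n g) : Disjoint X Y :=
  Set.disjoint_left.2 fun _ hx hy => (h.left_lt_right hx hy).false

theorem lt_of_mem_union (h : FlawedSetOrderedLabeling G X Y s n g) {v : V} (hv : v ∈ X ∪ Y) :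
    g v < n :=
  hv.elim (fun hx => (h.left_lt v hx).trans_le h.threshold_le) (h.right_lt v)

theorem injOn_edgeLabel (h : FlawedSetOrderedLabeling G X Y s n g)
    (hG : ∀ ⦃u v : V⦄, G.Adj u v → (u ∈ X ∧ v ∈ Y) ∨ (u ∈ Y ∧ v ∈ X)) :
    Set.InjOn (edgeLabel g) G.edgeSet := by
  have exists_oriented : ∀ e ∈ G.edgeSet, ∃ x ∈ X, ∃ y ∈ Y, G.Adj x y ∧ s(x, y) = e := by
    rintro ⟨u, v⟩ huv
    rcases hG huv with ⟨hu, hv⟩ | ⟨hu, hv⟩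
    · exact ⟨u, hu, v, hv, huv, rfl⟩
    · exact ⟨v, hv, u, hu, huv.symm, Sym2.eq_swap⟩
  intro e he e' he' hee'
  obtain ⟨x, hx, y, hy, hxy, rfl⟩ := exists_oriented e he
  obtain ⟨x', hx', y', hy', hxy', rfl⟩ := exists_oriented e' he'
  have hlt := h.left_lt_right hx hy
  have hlt' := h.left_lt_right hx' hy'
  rw [edgeLabel_mk, edgeLabel_mk, Nat.dist_eq_sub_of_le hlt.le, Nat.dist_eq_sub_of_le hlt'.le]
    at hee'
  obtain ⟨rfl, rfl⟩ := h.edge_unique x hx y hy x' hx' y' hy' hxy hxy' (by omega)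
  rfl

theorem exists_of_graceful {q : ℕ} (hq : q = Nat.card (G.induce (X ∪ Y)).edgeSet)
    (hInj : Set.InjOn g (X ∪ Y)) (hBound : ∀ v ∈ X ∪ Y, g v ≤ q)
    (hOrder : ∀ x ∈ X, ∀ y ∈ Y, g x < g y)
    (hLabels : {c | ∃ u ∈ X ∪ Y, ∃ v ∈ X ∪ Y, G.Adj u v ∧ Nat.dist (g u) (g v) = c} =
      Set.Icc 1 q) :
    ∃ s, FlawedSetOrderedLabeling G X Y s (q + 1) g := by
  obtain ⟨s, hsn, hXs, hsY⟩ := exists_threshold_of_forall_lt (A := g '' X) (B := g '' Y)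
    (Set.forall_mem_image.2 fun x hx => Nat.lt_succ_of_le (hBound x (Or.inl hx)))
    (Set.forall_mem_image.2 fun x hx => Set.forall_mem_image.2 (hOrder x hx))
  have : Finite ↥(X ∪ Y) := Set.Finite.of_injOn (t := Set.Iic q) hBound hInj (Set.finite_Iic q)
  have hEdges : Set.InjOn (edgeLabel fun v : ↥(X ∪ Y) => g v) (G.induce (X ∪ Y)).edgeSet :=
    injOn_edgeLabel_of_image_eq_Icc (by rw [edgeLabel_image_edgeSet_induce, hLabels, hq])
  refine ⟨s, hsn, hInj, fun x hx => hXs _ ⟨x, hx, rfl⟩, fun y hy => hsY _ ⟨y, hy, rfl⟩,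
    fun y hy => Nat.lt_succ_of_le (hBound y (Or.inr hy)), ?_⟩
  intro x hx y hy x' hx' y' hy' hxy hxy' hsum
  have hlt := hOrder x hx y hy
  have hlt' := hOrder x' hx' y' hy'
  have hdist : Nat.dist (g x) (g y) = Nat.dist (g x') (g y') := by
    rw [Nat.dist_eq_sub_of_le hlt.le, Nat.dist_eq_sub_of_le hlt'.le]
    omega
  have hedge := hEdges (x₁ := s(⟨x, Or.inl hx⟩, ⟨y, Or.inr hy⟩))
    (x₂ := s(⟨x', Or.inl hx'⟩, ⟨y', Or.inr hy'⟩)) hxy hxy' hdist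
  rcases Sym2.eq_iff.1 hedge with ⟨hxx', hyy'⟩ | ⟨hxy', -⟩
  · exact ⟨congrArg Subtype.val hxx', congrArg Subtype.val hyy'⟩
  · obtain rfl : x = y' := congrArg Subtype.val hxy'
    exact absurd (hOrder x hx x hy') (lt_irrefl _)

theorem raise_right (h : FlawedSetOrderedLabeling G X Y s n g) (k : ℕ) {g' : V → ℕ}
    (hX : ∀ x ∈ X, g' x = g x) (hY : ∀ y ∈ Y, g' y = g y + k) :
    FlawedSetOrderedLabeling G X Y s (n + k) g' where
  threshold_le := h.threshold_le.trans (Nat.le_add_right n k)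
  injOn := by
    have hXY : ∀ x ∈ X, ∀ y ∈ Y, g' x < g' y := fun x hx y hy => by
      rw [hX x hx, hY y hy]
      exact (h.left_lt_right hx hy).trans_le (Nat.le_add_right _ k)
    refine (Set.injOn_union h.disjoint).2 ⟨?_, ?_, fun x hx y hy => (hXY x hx y hy).ne⟩
    · exact (h.injOn.mono Set.subset_union_left).congr fun x hx => (hX x hx).symm
    · exact ((add_left_injective k).comp_injOn (h.injOn.mono Set.subset_union_right)).congr
        fun y hy => (hY y hy).symm
  left_lt x hx := (hX x hx).trans_lt (h.left_lt x hx)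
  le_right y hy := hY y hy ▸ (h.le_right y hy).trans (Nat.le_add_right _ k)
  right_lt y hy := hY y hy ▸ Nat.add_lt_add_right (h.right_lt y hy) k
  edge_unique x hx y hy x' hx' y' hy' hxy hxy' hsum := by
    rw [hX x hx, hX x' hx', hY y hy, hY y' hy'] at hsum
    exact h.edge_unique x hx y hy x' hx' y' hy' hxy hxy' (by omega)

theorem translate (h : FlawedSetOrderedLabeling G X Y s n g) (k : ℕ) {g' : V → ℕ}
    (hg : ∀ v ∈ X ∪ Y, g' v = g v + k) :
    FlawedSetOrderedLabeling G X Y (s + k) (n + k) g' where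
  threshold_le := Nat.add_le_add_right h.threshold_le k
  injOn := ((add_left_injective k).comp_injOn h.injOn).congr fun v hv => (hg v hv).symm
  left_lt x hx := hg x (Or.inl hx) ▸ Nat.add_lt_add_right (h.left_lt x hx) k
  le_right y hy := hg y (Or.inr hy) ▸ Nat.add_le_add_right (h.le_right y hy) k
  right_lt y hy := hg y (Or.inr hy) ▸ Nat.add_lt_add_right (h.right_lt y hy) k
  edge_unique x hx y hy x' hx' y' hy' hxy hxy' hsum := by
    rw [hg x (Or.inl hx), hg x' (Or.inl hx'), hg y (Or.inr hy), hg y' (Or.inr hy')] at hsum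
    exact h.edge_unique x hx y hy x' hx' y' hy' hxy hxy' (by omega)

end Single

section Union

variable {X₁ Y₁ X₂ Y₂ : Set V} {s₁ n₁ s₂ n₂ : ℕ}

theorem union_of_nested {g : V → ℕ} (h₁ : FlawedSetOrderedLabeling G X₁ Y₁ s₁ n₁ g)
    (h₂ : FlawedSetOrderedLabeling G X₂ Y₂ s₂ n₂ g) (hs : s₁ ≤ s₂) (hn : n₂ ≤ n₁)
    (hlow : ∀ v ∈ X₂ ∪ Y₂, s₁ ≤ g v) (hhigh : ∀ y ∈ Y₁, n₂ ≤ g y)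
    (hadj : ∀ u ∈ X₁ ∪ Y₁, ∀ v ∈ X₂ ∪ Y₂, ¬ G.Adj u v) :
    FlawedSetOrderedLabeling G (X₁ ∪ X₂) (Y₁ ∪ Y₂) s₂ n₁ g where
  threshold_le := h₂.threshold_le.trans hn
  injOn := by
    have hne : ∀ u ∈ X₁ ∪ Y₁, ∀ v ∈ X₂ ∪ Y₂, g u ≠ g v := by
      rintro u (hu | hu) v hv
      · exact ((h₁.left_lt u hu).trans_le (hlow v hv)).ne
      · exact ((h₂.lt_of_mem_union hv).trans_le (hhigh u hu)).ne'
    have hdisj : Disjoint (X₁ ∪ Y₁) (X₂ ∪ Y₂) :=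
      Set.disjoint_left.2 fun v hv₁ hv₂ => hne v hv₁ v hv₂ rfl
    rw [Set.union_union_union_comm]
    exact (Set.injOn_union hdisj).2 ⟨h₁.injOn, h₂.injOn, hne⟩
  left_lt x hx := hx.elim (fun hx => (h₁.left_lt x hx).trans_le hs) (h₂.left_lt x)
  le_right y hy := hy.elim (fun hy => h₂.threshold_le.trans (hhigh y hy)) (h₂.le_right y)
  right_lt y hy := hy.elim (h₁.right_lt y) fun hy => (h₂.right_lt y hy).trans_le hn
  edge_unique := by
    have same_component : ∀ x ∈ X₁ ∪ X₂, ∀ y ∈ Y₁ ∪ Y₂, G.Adj x y →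
        (x ∈ X₁ ∧ y ∈ Y₁) ∨ (x ∈ X₂ ∧ y ∈ Y₂) := by
      rintro x (hx | hx) y (hy | hy) hxy
      · exact Or.inl ⟨hx, hy⟩
      · exact absurd hxy (hadj x (Or.inl hx) y (Or.inr hy))
      · exact absurd hxy.symm (hadj y (Or.inr hy) x (Or.inl hx))
      · exact Or.inr ⟨hx, hy⟩
    -- outer labels exceed `n₂ - s₁`, inner labels are smaller
    have inner_lt_outer : ∀ x ∈ X₁, ∀ y ∈ Y₁, ∀ x' ∈ X₂, ∀ y' ∈ Y₂, g y' + g x < g y + g x' :=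
      fun x hx y hy x' hx' y' hy' => by
        have hx₁ := h₁.left_lt x hx
        have hx₂ := hlow x' (Or.inl hx')
        have hy₁ := hhigh y hy
        have hy₂ := h₂.right_lt y' hy'
        omega
    intro x hx y hy x' hx' y' hy' hxy hxy' hsum
    rcases same_component x hx y hy hxy with ⟨hx, hy⟩ | ⟨hx, hy⟩ <;>
      rcases same_component x' hx' y' hy' hxy' with ⟨hx', hy'⟩ | ⟨hx', hy'⟩
    · exact h₁.edge_unique x hx y hy x' hx' y' hy' hxy hxy' hsum
    · exact absurd hsum (inner_lt_outer x hx y hy x' hx' y' hy').ne'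
    · exact absurd hsum (inner_lt_outer x' hx' y' hy' x hx y hy).ne
    · exact h₂.edge_unique x hx y hy x' hx' y' hy' hxy hxy' hsum

theorem union {g₁ g₂ : V → ℕ} (h₁ : FlawedSetOrderedLabeling G X₁ Y₁ s₁ n₁ g₁)
    (h₂ : FlawedSetOrderedLabeling G X₂ Y₂ s₂ n₂ g₂)
    (hdisj : Disjoint (X₁ ∪ Y₁) (X₂ ∪ Y₂))
    (hadj : ∀ u ∈ X₁ ∪ Y₁, ∀ v ∈ X₂ ∪ Y₂, ¬ G.Adj u v) :
    FlawedSetOrderedLabeling G (X₁ ∪ X₂) (Y₁ ∪ Y₂) (s₁ + s₂) (n₁ + n₂)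
      (nestedLabeling X₁ Y₁ s₁ n₂ g₁ g₂) := by
  have hY₁ : ∀ y ∈ Y₁, nestedLabeling X₁ Y₁ s₁ n₂ g₁ g₂ y = g₁ y + n₂ := fun y hy =>
    nestedLabeling_of_mem_right (h₁.disjoint.notMem_of_mem_right hy) hy
  have hXY₂ : ∀ v ∈ X₂ ∪ Y₂, nestedLabeling X₁ Y₁ s₁ n₂ g₁ g₂ v = g₂ v + s₁ := fun v hv =>
    nestedLabeling_of_notMem (hdisj.notMem_of_mem_right hv)
  have outer := h₁.raise_right n₂ (fun x hx => nestedLabeling_of_mem_left hx) hY₁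
  have inner := h₂.translate s₁ hXY₂
  have hle := h₁.threshold_le
  rw [Nat.add_comm s₁ s₂]
  refine outer.union_of_nested inner (Nat.le_add_left s₁ s₂) (by omega) (fun v hv => ?_)
    (fun y hy => ?_) hadj
  · exact hXY₂ v hv ▸ Nat.le_add_left s₁ (g₂ v)
  · have hsy := h₁.le_right y hy
    rw [hY₁ y hy]
    omega

end Union

section Family

variable {ι : Type*} {X Y : ι → Set V} {s n : ι → ℕ} {g : ι → V → ℕ}

theorem exists_biUnion
    (h : ∀ i, FlawedSetOrderedLabeling G (X i) (Y i) (s i) (n i) (g i))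
    (hdisj : Pairwise (Function.onFun Disjoint fun i => X i ∪ Y i))
    (hadj : Pairwise fun i j => ∀ u ∈ X i ∪ Y i, ∀ v ∈ X j ∪ Y j, ¬ G.Adj u v) (I : Finset ι) :
    ∃ g', FlawedSetOrderedLabeling G (⋃ i ∈ I, X i) (⋃ i ∈ I, Y i) (∑ i ∈ I, s i) (∑ i ∈ I, n i)
      g' := by
  classical
  induction I using Finset.induction_on with
  | empty => exact ⟨0, by constructor <;> simp⟩
  | insert i I hi ih =>
    obtain ⟨g', hg'⟩ := ih
    have hunion : ∀ v ∈ (⋃ j ∈ I, X j) ∪ ⋃ j ∈ I, Y j, ∃ j, i ≠ j ∧ v ∈ X j ∪ Y j := by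
      simp_rw [← Set.iUnion_union_distrib]
      intro v hv
      obtain ⟨j, hj, hvj⟩ := Set.mem_iUnion₂.1 hv
      exact ⟨j, fun hij => hi (hij ▸ hj), hvj⟩
    rw [Finset.set_biUnion_insert, Finset.set_biUnion_insert, Finset.sum_insert hi,
      Finset.sum_insert hi]
    refine ⟨_, (h i).union hg' (Set.disjoint_left.2 fun v hvi hv => ?_) fun u hu v hv => ?_⟩
    · obtain ⟨j, hij, hvj⟩ := hunion v hv
      exact Set.disjoint_left.1 (hdisj hij) hvi hvj
    · obtain ⟨j, hij, hvj⟩ := hunion v hv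
      exact hadj hij u hu v hvj

theorem exists_iUnion [Fintype ι]
    (h : ∀ i, FlawedSetOrderedLabeling G (X i) (Y i) (s i) (n i) (g i))
    (hdisj : Pairwise (Function.onFun Disjoint fun i => X i ∪ Y i))
    (hadj : Pairwise fun i j => ∀ u ∈ X i ∪ Y i, ∀ v ∈ X j ∪ Y j, ¬ G.Adj u v) :
    ∃ g', FlawedSetOrderedLabeling G (⋃ i, X i) (⋃ i, Y i) (∑ i, s i) (∑ i, n i) g' := by
  simpa only [Finset.mem_univ, Set.iUnion_true] using exists_biUnion h hdisj hadj Finset.univ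

end Family

end FlawedSetOrderedLabeling

theorem disconnected_flawed_set_ordered_graceful_labeling_general
    {V ι : Type*} [Fintype ι] (G : SimpleGraph V)
    (X Y : ι → Set V) (q : ι → ℕ) (f : ι → V → ℕ)
    (hPart : ∀ v : V, ∃! i, v ∈ X i ∪ Y i)
    (hBip : ∀ i, ∀ ⦃u v : V⦄, G.Adj u v → u ∈ X i ∪ Y i →
      (u ∈ X i ∧ v ∈ Y i) ∨ (u ∈ Y i ∧ v ∈ X i))
    (hq : ∀ i, q i = Nat.card (G.induce (X i ∪ Y i)).edgeSet)
    (hInj : ∀ i, Set.InjOn (f i) (X i ∪ Y i))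
    (hBound : ∀ i, ∀ v ∈ X i ∪ Y i, f i v ≤ q i)
    (hOrder : ∀ i, ∀ x ∈ X i, ∀ y ∈ Y i, f i x < f i y)
    (hLabels : ∀ i,
      {c | ∃ u ∈ X i ∪ Y i, ∃ v ∈ X i ∪ Y i, G.Adj u v ∧ Nat.dist (f i u) (f i v) = c} =
        Set.Icc 1 (q i)) :
    ∃ g : V → ℕ,
      Function.Injective g ∧
      (∀ v : V, g v < ∑ i, q i + Fintype.card ι) ∧
      (∀ x y : V, (∃ i, x ∈ X i) → (∃ i, y ∈ Y i) → g x < g y) ∧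
      (∀ ⦃u v u' v' : V⦄, G.Adj u v → G.Adj u' v' → s(u, v) ≠ s(u', v') →
        Nat.dist (g u) (g v) ≠ Nat.dist (g u') (g v')) ∧
      (∀ ⦃u v : V⦄, G.Adj u v →
        1 ≤ Nat.dist (g u) (g v) ∧ Nat.dist (g u) (g v) ≤ ∑ i, q i + Fintype.card ι - 1) := by
  choose s hs using fun i => FlawedSetOrderedLabeling.exists_of_graceful (hq i) (hInj i)
    (hBound i) (hOrder i) (hLabels i)
  have hdisj : Pairwise (Function.onFun Disjoint fun i => X i ∪ Y i) := fun i j hij =>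
    Set.disjoint_left.2 fun v hi hj => hij ((hPart v).unique hi hj)
  have hadj : Pairwise fun i j => ∀ u ∈ X i ∪ Y i, ∀ v ∈ X j ∪ Y j, ¬ G.Adj u v :=
    fun i j hij u hu v hv huv =>
      have hvi : v ∈ X i ∪ Y i := (hBip i huv hu).elim (fun h => Or.inr h.2) fun h => Or.inl h.2
      hij ((hPart v).unique hvi hv)
  obtain ⟨g, hg⟩ := FlawedSetOrderedLabeling.exists_iUnion hs hdisj hadj
  rw [Finset.sum_add_distrib, ← Fintype.card_eq_sum_ones] at hg
  have hcover : ∀ v, v ∈ (⋃ i, X i) ∪ ⋃ i, Y i := fun v => by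
    rw [← Set.iUnion_union_distrib]
    exact Set.mem_iUnion.2 (hPart v).exists
  have hG : ∀ ⦃u v⦄, G.Adj u v →
      (u ∈ ⋃ i, X i) ∧ (v ∈ ⋃ i, Y i) ∨ (u ∈ ⋃ i, Y i) ∧ (v ∈ ⋃ i, X i) := fun u v huv => by
    obtain ⟨i, hu, -⟩ := hPart u
    exact (hBip i huv hu).imp
      (And.imp (Set.mem_iUnion_of_mem i) (Set.mem_iUnion_of_mem i))
      (And.imp (Set.mem_iUnion_of_mem i) (Set.mem_iUnion_of_mem i))
  have hinj : Function.Injective g := fun u v => hg.injOn (hcover u) (hcover v)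
  have hlt : ∀ v, g v < ∑ i, q i + Fintype.card ι := fun v => hg.lt_of_mem_union (hcover v)
  refine ⟨g, hinj, hlt, fun x y hx hy => ?_, fun u v u' v' huv huv' hne heq => ?_,
    fun u v huv => ⟨Nat.dist_pos_of_ne (hinj.ne huv.ne), ?_⟩⟩
  · exact hg.left_lt_right (Set.mem_iUnion.2 hx) (Set.mem_iUnion.2 hy)
  · exact hne (hg.injOn_edgeLabel hG huv huv' heq)
  · have hu := hlt u
    have hv := hlt v
    rw [Nat.dist]
    omega

/-- A disconnected graph whose components are connected bipartite graphs
that all admit set-ordered graceful labelings admits a flawed set-ordered graceful labeling. -/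
theorem disconnected_flawed_set_ordered_graceful_labeling
    {V : Type} [Fintype V] [DecidableEq V]
    (G : SimpleGraph V) (m : ℕ) (hm : 2 ≤ m)
    (P X Y : Fin m → Set V) (q : Fin m → ℕ) (f : Fin m → V → ℕ)
    -- the `P i` partition the vertex set, and there is no edge between different parts,
    -- so the `P i` are the vertex sets of the connected components `H_i`
    (hPart : ∀ v : V, ∃! i : Fin m, v ∈ P i)
    (hNoCross : ∀ ⦃u v : V⦄, G.Adj u v → ∀ i : Fin m, u ∈ P i → v ∈ P i)
    -- each component is connected and has `q i ≥ 1` edges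
    (hConn : ∀ i : Fin m, (G.induce (P i)).Connected)
    (hq : ∀ i : Fin m, q i = Nat.card (G.induce (P i)).edgeSet)
    (hq1 : ∀ i : Fin m, 1 ≤ q i)
    -- `(X i, Y i)` is a vertex bipartition of the component `H_i`
    (hXY : ∀ i : Fin m, X i ∪ Y i = P i)
    (hDisj : ∀ i : Fin m, Disjoint (X i) (Y i))
    (hBip : ∀ i : Fin m, ∀ ⦃u v : V⦄, G.Adj u v → u ∈ P i → v ∈ P i →
      (u ∈ X i ∧ v ∈ Y i) ∨ (u ∈ Y i ∧ v ∈ X i))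
    -- `f i` is a set-ordered graceful labeling of the component `H_i`
    (hInj : ∀ i : Fin m, Set.InjOn (f i) (P i))
    (hBound : ∀ i : Fin m, ∀ v ∈ P i, f i v ≤ q i)
    (hOrder : ∀ i : Fin m, ∀ x ∈ X i, ∀ y ∈ Y i, f i x < f i y)
    (hLabels : ∀ i : Fin m,
      {c : ℕ | ∃ u ∈ P i, ∃ v ∈ P i, G.Adj u v ∧ Nat.dist (f i u) (f i v) = c}
        = Set.Icc 1 (q i)) :
    -- conclusion: a flawed set-ordered graceful labeling of `G`, with colors in
    -- `{0, …, q + m - 1}` where `q = q 1 + ⋯ + q m`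
    ∃ g : V → ℕ,
      Function.Injective g ∧
      (∀ v : V, g v < (∑ i : Fin m, q i) + m) ∧
      (∀ x y : V, (∃ i : Fin m, x ∈ X i) → (∃ i : Fin m, y ∈ Y i) → g x < g y) ∧
      (∀ ⦃u v u' v' : V⦄, G.Adj u v → G.Adj u' v' → s(u, v) ≠ s(u', v') →
        Nat.dist (g u) (g v) ≠ Nat.dist (g u') (g v')) ∧
      (∀ ⦃u v : V⦄, G.Adj u v →
        1 ≤ Nat.dist (g u) (g v) ∧ Nat.dist (g u) (g v) ≤ (∑ i : Fin m, q i) + m - 1) := by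
  obtain rfl : P = fun i => X i ∪ Y i := funext fun i => (hXY i).symm
  simpa using disconnected_flawed_set_ordered_graceful_labeling_general G X Y q f hPart
    (fun i _ _ huv hu => hBip i huv hu (hNoCross huv i hu)) hq hInj hBound hOrder hLabels
end

section
/- Let k ≥ 0 and d ≥ 1 be integers. Every tree T with at least one edge admits a harmonious (k,d)-total coloring. -/
/-!
Any prescription of edge sums on a forest is realised by a vertex labeling with values in an abelian
group: root every component and give a vertex the alternating sum of the prescribed values along
its path to the root. So number the `q` edges by `0, …, q - 1` in any way and solve
`g u + g v = l(uv)` in `ZMod q`. Scaling by `d`, and shifting by `k` the edges and the vertices on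
one side of the bipartition, adds `k` to both sides of each of these equations.
-/

section AlternatingSum

variable {V A : Type*} [AddCommGroup A] {G : SimpleGraph V}

/-- The alternating sum `l e₁ - l e₂ + l e₃ - ⋯` over the edges `e₁, e₂, e₃, …` of a walk, from
which the vertex labels of a rooted forest are read off. It is defined by recursion from the first
edge, so that prepending an edge to a walk makes the two sums add up to the label of that edge. -/
def alternatingSum (l : Sym2 V → A) : ∀ {u v : V}, G.Walk u v → A
  | _, _, .nil => 0
  | u, _, .cons (v := w) _ p => l s(u, w) - alternatingSum l p

theorem alternatingSum_cons_add_alternatingSum (l : Sym2 V → A) {u v w : V} (h : G.Adj u v)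
    (p : G.Walk v w) : alternatingSum l (.cons h p) + alternatingSum l p = l s(u, v) :=
  sub_add_cancel _ _

theorem eq_cons_or_eq_cons_of_isAcyclic_of_isPath (hG : G.IsAcyclic) {u v r : V} (h : G.Adj u v)
    {p : G.Walk u r} {q : G.Walk v r} (hp : p.IsPath) (hq : q.IsPath) :
    p = .cons h q ∨ q = .cons h.symm p := by
  have path_unique {w : V} {p₁ p₂ : G.Walk w r} (h₁ : p₁.IsPath) (h₂ : p₂.IsPath) : p₁ = p₂ :=
    congrArg Subtype.val ((hG.subsingleton_path w r).elim ⟨p₁, h₁⟩ ⟨p₂, h₂⟩)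
  by_cases hu : u ∈ q.support
  · have hv : v ∉ p.support := by
      simpa using hG.ne_mem_support_of_support_of_adj_of_isPath hq.reverse hp.reverse h.symm
        (by simpa using hu)
    exact .inr (path_unique hq (hp.cons hv))
  · exact .inl (path_unique hp (hq.cons hu))

theorem alternatingSum_add_alternatingSum_of_isPath (hG : G.IsAcyclic) (l : Sym2 V → A) {u v r : V}
    (h : G.Adj u v) {p : G.Walk u r} {q : G.Walk v r} (hp : p.IsPath) (hq : q.IsPath) :
    alternatingSum l p + alternatingSum l q = l s(u, v) := by
  obtain rfl | rfl := eq_cons_or_eq_cons_of_isAcyclic_of_isPath hG h hp hq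
  · exact alternatingSum_cons_add_alternatingSum l h q
  · rw [add_comm, alternatingSum_cons_add_alternatingSum, Sym2.eq_swap]

theorem exists_add_eq_of_isAcyclic (hG : G.IsAcyclic) (l : Sym2 V → A) :
    ∃ g : V → A, ∀ ⦃u v : V⦄, G.Adj u v → g u + g v = l s(u, v) := by
  have exists_path_to_root (v : V) : ∃ p : G.Walk v (G.connectedComponentMk v).out, p.IsPath :=
    (SimpleGraph.ConnectedComponent.exact (Quot.out_eq _).symm).exists_isPath
  choose p hp using exists_path_to_root
  refine ⟨fun v ↦ alternatingSum l (p v), fun u v h ↦ ?_⟩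
  have same_root : (G.connectedComponentMk u).out = (G.connectedComponentMk v).out := by
    rw [SimpleGraph.ConnectedComponent.connectedComponentMk_eq_of_adj h]
  have sum_eq {r s : V} (hrs : r = s) {a : G.Walk u r} {b : G.Walk v s} (ha : a.IsPath)
      (hb : b.IsPath) : alternatingSum l a + alternatingSum l b = l s(u, v) := by
    subst hrs
    exact alternatingSum_add_alternatingSum_of_isPath hG l h ha hb
  exact sum_eq same_root (hp u) (hp v)

theorem exists_nat_add_modEq_of_isAcyclic (hG : G.IsAcyclic) (n : ℕ) [NeZero n]
    (l : Sym2 V → ℕ) :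
    ∃ g : V → ℕ, ∀ ⦃u v : V⦄, G.Adj u v → g u + g v ≡ l s(u, v) [MOD n] := by
  obtain ⟨g, hg⟩ := exists_add_eq_of_isAcyclic hG fun e ↦ (l e : ZMod n)
  refine ⟨fun v ↦ (g v).val, fun u v h ↦ ?_⟩
  rw [← ZMod.natCast_eq_natCast_iff, Nat.cast_add, ZMod.natCast_zmod_val, ZMod.natCast_zmod_val,
    hg h]

end AlternatingSum

theorem exists_image_eq_Iio_card {α : Type*} (s : Set α) [Finite s] :
    ∃ l : α → ℕ, l '' s = Set.Iio (Nat.card s) := by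
  have same_encard : s.encard = (Set.Iio (Nat.card s)).encard := by
    simp [Set.encard_eq_coe_toFinset_card, Nat.card_coe_set_eq, s.toFinite.cast_ncard_eq]
  obtain ⟨l, hl⟩ := s.toFinite.exists_bijOn_of_encard_eq same_encard
  exact ⟨l, hl.image_eq⟩

section Coloring

variable {V : Type} {G : SimpleGraph V} {X Y : Set V} {l : Sym2 V → ℕ} {q : ℕ}

theorem exists_isBipartitionOf_of_isBipartite (hG : G.IsBipartite) :
    ∃ X Y : Set V, IsBipartitionOf G X Y := by
  obtain ⟨c⟩ := hG
  refine ⟨{v | c v = 0}, {v | c v ≠ 0}, fun v ↦ em _, Set.disjoint_left.mpr fun v h h' ↦ h' h,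
    fun u v h ↦ ?_⟩
  have hne : c u ≠ c v := c.valid h
  simp only [Set.mem_ofPred_eq]
  omega

theorem edgeColorSet_eq_image (G : SimpleGraph V) (fE : Sym2 V → ℕ) :
    EdgeColorSet G fE = fE '' G.edgeSet := by
  ext c
  simp [EdgeColorSet, Sym2.exists]

theorem arithProgSet_eq_image (k d q : ℕ) :
    ArithProgSet k d q = (fun j ↦ k + j * d) '' Set.Iio q := by
  ext c
  simp [ArithProgSet, eq_comm]

theorem IsBipartitionOf.indicator_add_indicator {M : Type*} [AddZeroClass M]
    (hXY : IsBipartitionOf G X Y) (c : M) {u v : V} (h : G.Adj u v) :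
    Y.indicator (fun _ ↦ c) u + Y.indicator (fun _ ↦ c) v = c := by
  obtain ⟨-, hdisj, hadj⟩ := hXY
  obtain ⟨hu, hv⟩ | ⟨hu, hv⟩ := hadj h
  · simp [Set.disjoint_left.mp hdisj hu, hv]
  · simp [Set.disjoint_left.mp hdisj hv, hu]

theorem IsBipartitionOf.harmoniousKDTotalColoring_of_add_modEq (hXY : IsBipartitionOf G X Y)
    (k d : ℕ) (hl : l '' G.edgeSet = Set.Iio q) {g : V → ℕ}
    (hg : ∀ ⦃u v : V⦄, G.Adj u v → g u + g v ≡ l s(u, v) [MOD q]) :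
    HarmoniousKDTotalColoring G X Y k d q
      (fun v ↦ Y.indicator (fun _ ↦ k) v + g v * d) (fun e ↦ k + l e * d) := by
  refine ⟨⟨fun x hx ↦ ?_, fun y hy ↦ ⟨g y, ?_⟩, fun u v _ ↦ ⟨l s(u, v), rfl⟩⟩,
    fun u v h ↦ ?_, ?_⟩
  · simp [Set.disjoint_left.mp hXY.2.1 hx]
  · simp [hy]
  · have shift : (Y.indicator (fun _ ↦ k) u + Y.indicator (fun _ ↦ k) v : ℤ) = k :=
      mod_cast hXY.indicator_add_indicator k h
    have scaled : ((l s(u, v) * d : ℕ) : ℤ) ≡ (((g u + g v) * d : ℕ) : ℤ) [ZMOD (q * d : ℕ)] :=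
      Int.natCast_modEq_iff.mpr ((hg h).symm.mul_right' d)
    convert scaled using 1
    · push_cast
      ring
    · push_cast
      linear_combination shift
  · rw [edgeColorSet_eq_image, arithProgSet_eq_image, ← hl, Set.image_image]

theorem IsBipartitionOf.exists_harmoniousKDTotalColoring_of_isAcyclic
    (hXY : IsBipartitionOf G X Y) (hG : G.IsAcyclic) (k d : ℕ)
    (hl : l '' G.edgeSet = Set.Iio q) :
    ∃ fV : V → ℕ, HarmoniousKDTotalColoring G X Y k d q fV fun e ↦ k + l e * d := by
  obtain rfl | _ := eq_zero_or_neZero q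
  · obtain rfl : G = ⊥ := by simpa using hl
    exact ⟨_, hXY.harmoniousKDTotalColoring_of_add_modEq k d hl (g := 0) fun _ _ h ↦ h.elim⟩
  · obtain ⟨g, hg⟩ := exists_nat_add_modEq_of_isAcyclic hG q l
    exact ⟨_, hXY.harmoniousKDTotalColoring_of_add_modEq k d hl hg⟩

end Coloring

theorem tree_harmonious_kd_total_coloring_general {V : Type} {G : SimpleGraph V}
    [Finite G.edgeSet] (hG : G.IsAcyclic) {X Y : Set V} (hXY : IsBipartitionOf G X Y) (k d : ℕ) :
    ∃ (fV : V → ℕ) (fE : Sym2 V → ℕ),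
      HarmoniousKDTotalColoring G X Y k d (Nat.card G.edgeSet) fV fE := by
  obtain ⟨l, hl⟩ := exists_image_eq_Iio_card G.edgeSet
  obtain ⟨fV, hf⟩ := hXY.exists_harmoniousKDTotalColoring_of_isAcyclic hG k d hl
  exact ⟨fV, _, hf⟩

/-- Every tree with at least one edge admits a harmonious
`(k,d)`-total coloring (for any `k ≥ 0`, `d ≥ 1`). -/
theorem tree_harmonious_kd_total_coloring
    {V : Type} [Fintype V] [DecidableEq V]
    (T : SimpleGraph V) (hT : T.IsTree)
    (hq : 1 ≤ Nat.card T.edgeSet)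
    (k d : ℕ) (hd : 1 ≤ d) :
    ∃ (X Y : Set V) (fV : V → ℕ) (fE : Sym2 V → ℕ),
      IsBipartitionOf T X Y ∧
      HarmoniousKDTotalColoring T X Y k d (Nat.card T.edgeSet) fV fE := by
  obtain ⟨X, Y, hXY⟩ := exists_isBipartitionOf_of_isBipartite hT.isBipartite
  obtain ⟨fV, fE, hf⟩ := tree_harmonious_kd_total_coloring_general hT.isAcyclic hXY k d
  exact ⟨X, Y, fV, fE, hXY, hf⟩
end

section
/- Let k ≥ 1 and d ≥ 1 be integers. If a connected graph G (necessarily bipartite, with q ≥ 1 edges) admits a set-ordered graceful labeling, then G admits a felicitous-difference (k,d)-total coloring and an odd-edge felicitous-difference (k,d)-total coloring. -/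
/-!
Reversing the labels on `X` turns label differences into label sums: for `x ∈ X` and `y ∈ Y`,
`(M - f x) + f y = M + |f x - f y|`. Scaling this identity by `m d` and shifting by `k` makes
`f(x) + f(y) - f(xy)` constant, while the edge colors become an arithmetic progression of
difference `m d`. The choice `m = 1` gives the felicitous-difference coloring and `m = 2` its
odd-edge variant.
-/

section

variable {V : Type} {G : SimpleGraph V} {X Y : Set V} {f : V → ℕ} {m : ℕ}

/-- The edge labeling `uv ↦ |f u - f v|` induced by a vertex labeling `f`, as in the definition of
a graceful labeling. -/
def inducedEdgeLabel (f : V → ℕ) : Sym2 V → ℕ :=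
  Sym2.lift ⟨fun u v => Nat.dist (f u) (f v), fun _ _ => Nat.dist_comm _ _⟩

/-- The edge part of the total coloring with scale `m` built from a vertex labeling `f`. The
subtraction is not truncated on edges with nonzero induced label when `1 ≤ m`. -/
def felicitousEdgeColor (f : V → ℕ) (k d m : ℕ) (e : Sym2 V) : ℕ :=
  k + (m * inducedEdgeLabel f e - 1) * d

open Classical in
/-- The vertex part of the total coloring with scale `m` built from a set-ordered labeling `f`:
labels on `X` are reversed about the least label of `Y`. That label bounds those on `X`, so the
subtraction is not truncated unless `Y` is empty, where `sInf ∅ = 0`; then there are no edges. -/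
noncomputable def felicitousVertexColor (X Y : Set V) (f : V → ℕ) (k d m : ℕ) (v : V) : ℕ :=
  if v ∈ X then m * (sInf (f '' Y) - f v) * d else k + m * f v * d

theorem felicitousVertexColor_of_mem {v : V} (hv : v ∈ X) (k d : ℕ) :
    felicitousVertexColor X Y f k d m v = m * (sInf (f '' Y) - f v) * d :=
  if_pos hv

theorem felicitousVertexColor_of_notMem {v : V} (hv : v ∉ X) (k d : ℕ) :
    felicitousVertexColor X Y f k d m v = k + m * f v * d :=
  if_neg hv

theorem kdTotalVertexCond_felicitousColor (hXY : Disjoint X Y) (k d : ℕ) :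
    KDTotalVertexCond G X Y k d (felicitousVertexColor X Y f k d m)
      (felicitousEdgeColor f k d m) := by
  refine ⟨fun x hx => ?_, fun y hy => ?_, fun _ _ _ => ⟨_, rfl⟩⟩
  · exact felicitousVertexColor_of_mem hx k d ▸ dvd_mul_left d _
  · exact ⟨_, felicitousVertexColor_of_notMem (hXY.notMem_of_mem_right hy) k d⟩

theorem felicitousVertexColor_add (hXY : Disjoint X Y) (hlt : ∀ x ∈ X, ∀ y ∈ Y, f x < f y)
    (hm : 1 ≤ m) (k d : ℕ) {x y : V} (hx : x ∈ X) (hy : y ∈ Y) :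
    felicitousVertexColor X Y f k d m x + felicitousVertexColor X Y f k d m y =
      felicitousEdgeColor f k d m s(x, y) + (m * sInf (f '' Y) + 1) * d := by
  have hxy : f x < f y := hlt x hx y hy
  have hle : f x ≤ sInf (f '' Y) :=
    le_csInf ⟨f y, Set.mem_image_of_mem f hy⟩
      (Set.forall_mem_image.2 fun z hz => (hlt x hx z hz).le)
  have hpos : 1 ≤ m * (f y - f x) := Nat.mul_pos hm (Nat.sub_pos_of_lt hxy)
  have hlabel : inducedEdgeLabel f s(x, y) = f y - f x := Nat.dist_eq_sub_of_le hxy.le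
  rw [felicitousVertexColor_of_mem hx,
    felicitousVertexColor_of_notMem (hXY.notMem_of_mem_right hy), felicitousEdgeColor, hlabel]
  zify [hpos, hxy.le, hle]
  ring

theorem natAbs_felicitousVertexColor_add_sub (hbip : IsBipartitionOf G X Y)
    (hlt : ∀ x ∈ X, ∀ y ∈ Y, f x < f y) (hm : 1 ≤ m) (k d : ℕ) {u v : V} (huv : G.Adj u v) :
    ((felicitousVertexColor X Y f k d m u : ℤ) + felicitousVertexColor X Y f k d m v -
      felicitousEdgeColor f k d m s(u, v)).natAbs = (m * sInf (f '' Y) + 1) * d := by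
  obtain ⟨-, hXY, hadj⟩ := hbip
  have hsum : felicitousVertexColor X Y f k d m u + felicitousVertexColor X Y f k d m v =
      felicitousEdgeColor f k d m s(u, v) + (m * sInf (f '' Y) + 1) * d := by
    rcases hadj huv with ⟨hu, hv⟩ | ⟨hu, hv⟩
    · exact felicitousVertexColor_add hXY hlt hm k d hu hv
    · rw [add_comm, Sym2.eq_swap]
      exact felicitousVertexColor_add hXY hlt hm k d hv hu
  rw [← Nat.cast_add, hsum, Nat.cast_add, add_sub_cancel_left, Int.natAbs_natCast]

theorem edgeColorSet_comp (φ : ℕ → ℕ) (g : Sym2 V → ℕ) :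
    EdgeColorSet G (φ ∘ g) = φ '' EdgeColorSet G g := by
  ext c
  constructor
  · rintro ⟨u, v, huv, rfl⟩
    exact ⟨_, ⟨u, v, huv, rfl⟩, rfl⟩
  · rintro ⟨_, ⟨u, v, huv, rfl⟩, rfl⟩
    exact ⟨u, v, huv, rfl⟩

theorem edgeColorSet_felicitousEdgeColor (k d : ℕ) :
    EdgeColorSet G (felicitousEdgeColor f k d m) =
      (fun l => k + (m * l - 1) * d) '' EdgeColorSet G (inducedEdgeLabel f) :=
  edgeColorSet_comp (fun l => k + (m * l - 1) * d) (inducedEdgeLabel f)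

end

theorem image_Icc_eq_arithProgSet (k d q : ℕ) :
    (fun l => k + (l - 1) * d) '' Set.Icc 1 q = ArithProgSet k d q := by
  ext c
  constructor
  · rintro ⟨l, ⟨hl, hlq⟩, rfl⟩
    exact ⟨l - 1, by omega, rfl⟩
  · rintro ⟨j, hj, rfl⟩
    exact ⟨j + 1, ⟨by omega, hj⟩, rfl⟩

theorem image_Icc_eq_oddArithProgSet (k d q : ℕ) :
    (fun l => k + (2 * l - 1) * d) '' Set.Icc 1 q = OddArithProgSet k d q := by
  ext c
  simp only [Set.mem_image, Set.mem_Icc, OddArithProgSet, Set.mem_ofPred_eq, and_assoc, eq_comm]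

theorem set_ordered_graceful_to_felicitous_difference_kd_general
    {V : Type} (G : SimpleGraph V) (X Y : Set V) (f : V → ℕ) (q : ℕ)
    (hbip : IsBipartitionOf G X Y) (hlt : ∀ x ∈ X, ∀ y ∈ Y, f x < f y)
    (hlabels : EdgeColorSet G (inducedEdgeLabel f) = Set.Icc 1 q) (k d : ℕ) :
    (∃ (fV : V → ℕ) (fE : Sym2 V → ℕ), FelicitousDifferenceKDTotalColoring G X Y k d q fV fE) ∧
    (∃ (fV : V → ℕ) (fE : Sym2 V → ℕ),
      OddEdgeFelicitousDifferenceKDTotalColoring G X Y k d q fV fE) := by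
  refine ⟨⟨felicitousVertexColor X Y f k d 1, felicitousEdgeColor f k d 1,
      kdTotalVertexCond_felicitousColor hbip.2.1 k d,
      ⟨_, fun _ _ => natAbs_felicitousVertexColor_add_sub hbip hlt le_rfl k d⟩, ?_⟩,
    ⟨felicitousVertexColor X Y f k d 2, felicitousEdgeColor f k d 2,
      kdTotalVertexCond_felicitousColor hbip.2.1 k d,
      ⟨_, fun _ _ => natAbs_felicitousVertexColor_add_sub hbip hlt one_le_two k d⟩, ?_⟩⟩
  · simp only [edgeColorSet_felicitousEdgeColor, hlabels, one_mul, image_Icc_eq_arithProgSet]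
  · rw [edgeColorSet_felicitousEdgeColor, hlabels, image_Icc_eq_oddArithProgSet]

/-- **STATEMENT.** If a connected (bipartite) graph admits a set-ordered graceful labeling,
then it admits the stated `(k,d)`-total coloring and its odd-edge variant. -/
theorem set_ordered_graceful_to_felicitous_difference_kd
    {V : Type} [Fintype V] [DecidableEq V]
    (G : SimpleGraph V) (X Y : Set V) (f : V → ℕ)
    (hconn : G.Connected) (hbip : IsBipartitionOf G X Y)
    (hq : 1 ≤ Nat.card G.edgeSet)
    (hsog : SetOrderedGracefulLabeling G X Y f (Nat.card G.edgeSet))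
    (k d : ℕ) (hk : 1 ≤ k) (hd : 1 ≤ d) :
    (∃ (X' Y' : Set V) (fV : V → ℕ) (fE : Sym2 V → ℕ),
        IsBipartitionOf G X' Y' ∧
        FelicitousDifferenceKDTotalColoring G X' Y' k d (Nat.card G.edgeSet) fV fE) ∧
    (∃ (X' Y' : Set V) (fV : V → ℕ) (fE : Sym2 V → ℕ),
        IsBipartitionOf G X' Y' ∧
        OddEdgeFelicitousDifferenceKDTotalColoring G X' Y' k d (Nat.card G.edgeSet) fV fE) := by
  obtain ⟨-, -, hlt, hlabels⟩ := hsog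
  obtain ⟨⟨fV, fE, h⟩, gV, gE, hodd⟩ :=
    set_ordered_graceful_to_felicitous_difference_kd_general G X Y f _ hbip hlt hlabels k d
  exact ⟨⟨X, Y, fV, fE, hbip, h⟩, X, Y, gV, gE, hbip, hodd⟩
end
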